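/- Let k and i be integers with 1 < i < k. The number of permutations σ of {1,…,k} such that σ(i) = i and σ fixes no prefix of size j for any 1 ≤ j ≤ k−1 equals c_{k−1}, the number of connected permutations of size k−1. -/

import Mathlib

open Nat Finset

/-- The prefix `{1, …, j}` of `{1, …, n}`. We represent `{1, …, n}` by `Fin n`,
an element `x : Fin n` having label `x.val + 1`; so the prefix of size `j` is the
set of elements with label at most `j`. -/
def pref (n j : ℕ) : Finset (Fin n) :=
  Finset.univ.filter (fun x => x.val + 1 ≤ j)

/-- The segment `{u, …, v}` inside `{1, …, n}` (labels as above). -/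
def seg (n u v : ℕ) : Finset (Fin n) :=
  Finset.univ.filter (fun x => u ≤ x.val + 1 ∧ x.val + 1 ≤ v)

/-- A permutation `σ` of `{1, …, n}` fixes a prefix of size `j` if
`σ({1, …, j}) = {1, …, j}`. -/
def FixesPrefix {n : ℕ} (σ : Equiv.Perm (Fin n)) (j : ℕ) : Prop :=
  (pref n j).image σ = pref n j

/-- `c n`: the number of connected permutations of size `n`, i.e. permutations of
`{1, …, n}` fixing no prefix of size `j` for any `1 ≤ j ≤ n - 1`. -/
noncomputable def c (n : ℕ) : ℕ :=
  Nat.card {σ : Equiv.Perm (Fin n) // ∀ j, 1 ≤ j → j ≤ n - 1 → ¬ FixesPrefix σ j}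

/-- `cS n S`: the number of `S`-connected permutations of size `n`, i.e. permutations of
`{1, …, n}` fixing no prefix of size `j` for any `j ∈ S`. -/
noncomputable def cS (n : ℕ) (S : Finset ℕ) : ℕ :=
  Nat.card {σ : Equiv.Perm (Fin n) // ∀ j ∈ S, ¬ FixesPrefix σ j}

/-!
Deleting a fixed point `p` and closing up the gap is a bijection from the permutations of size
`n + 1` fixing `p` onto all permutations of size `n`. A fixed prefix ending before `p` keeps its
size under the deletion, and one containing `p` loses one element. When `p` is neither the first
nor the last element, the sizes `1, …, n` are thereby sent onto `1, …, n - 1`, so the bijection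
preserves and reflects connectedness.
-/

/-- Connected permutations of size `n`, the objects counted by `c n`. -/
def IsConnectedPerm {n : ℕ} (σ : Equiv.Perm (Fin n)) : Prop :=
  ∀ j, 1 ≤ j → j ≤ n - 1 → ¬ FixesPrefix σ j

lemma mem_pref {n j : ℕ} {x : Fin n} : x ∈ pref n j ↔ x.val < j := by
  simp [pref]

lemma fixesPrefix_iff_forall_lt {n : ℕ} (σ : Equiv.Perm (Fin n)) (j : ℕ) :
    FixesPrefix σ j ↔ ∀ x : Fin n, x.val < j → (σ x).val < j := by
  have image_subset : (pref n j).image σ ⊆ pref n j ↔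
      ∀ x : Fin n, x.val < j → (σ x).val < j := by
    simp only [Finset.image_subset_iff, mem_pref]
  rw [← image_subset]
  exact ⟨fun h => h.subset, fun h =>
    Finset.eq_of_subset_of_card_le h (Finset.card_image_of_injective _ σ.injective).ge⟩

section InsertFixedPoint

variable {n : ℕ} (p : Fin (n + 1))

/-- The bijection between permutations of size `n` and permutations of size `n + 1` fixing `p`,
relabelling the elements other than `p` along `p.succAbove`. Its inverse deletes `p`. -/
def insertFixedPoint : Equiv.Perm (Fin n) ≃ {σ : Equiv.Perm (Fin (n + 1)) // σ p = p} :=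
  (finSuccAboveEquiv p).permCongr.trans <|
    (Equiv.Perm.subtypeEquivSubtypePerm (· ≠ p)).trans <|
      Equiv.subtypeEquivRight fun σ => by simp

lemma insertFixedPoint_succAbove (τ : Equiv.Perm (Fin n)) (x : Fin n) :
    (insertFixedPoint p τ).val (p.succAbove x) = p.succAbove (τ x) :=
  Equiv.Perm.extendDomain_apply_image τ (finSuccAboveEquiv p) x

variable {p}

lemma val_succAbove_lt_iff_of_le {j : ℕ} (hj : j ≤ p.val) (x : Fin n) :
    (p.succAbove x).val < j ↔ x.val < j := by
  simp only [Fin.succAbove, Fin.lt_def, Fin.val_castSucc]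
  split_ifs
  · rfl
  · rw [Fin.val_succ]
    omega

lemma val_succAbove_lt_succ_iff_of_le {j : ℕ} (hj : p.val ≤ j) (x : Fin n) :
    (p.succAbove x).val < j + 1 ↔ x.val < j := by
  simp only [Fin.succAbove, Fin.lt_def, Fin.val_castSucc]
  split_ifs
  · rw [Fin.val_castSucc]
    omega
  · rw [Fin.val_succ]
    omega

lemma fixesPrefix_insertFixedPoint_iff_of_le {j : ℕ} (hj : j ≤ p.val)
    (τ : Equiv.Perm (Fin n)) :
    FixesPrefix (insertFixedPoint p τ).val j ↔ FixesPrefix τ j := by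
  simp only [fixesPrefix_iff_forall_lt, Fin.forall_iff_succAbove p, (insertFixedPoint p τ).property,
    insertFixedPoint_succAbove, val_succAbove_lt_iff_of_le hj, imp_self, true_and]

lemma fixesPrefix_insertFixedPoint_succ_iff_of_le {j : ℕ} (hj : p.val ≤ j)
    (τ : Equiv.Perm (Fin n)) :
    FixesPrefix (insertFixedPoint p τ).val (j + 1) ↔ FixesPrefix τ j := by
  simp only [fixesPrefix_iff_forall_lt, Fin.forall_iff_succAbove p, (insertFixedPoint p τ).property,
    insertFixedPoint_succAbove, val_succAbove_lt_succ_iff_of_le hj, imp_self, true_and]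

lemma isConnectedPerm_insertFixedPoint_iff (hpos : 0 < p.val) (hlt : p.val < n)
    (τ : Equiv.Perm (Fin n)) :
    IsConnectedPerm (insertFixedPoint p τ).val ↔ IsConnectedPerm τ := by
  constructor
  · intro hσ j hj hjn hfix
    rcases le_total j p.val with hjp | hpj
    · exact hσ j hj (by omega) ((fixesPrefix_insertFixedPoint_iff_of_le hjp τ).mpr hfix)
    · exact hσ (j + 1) (by omega) (by omega)
        ((fixesPrefix_insertFixedPoint_succ_iff_of_le hpj τ).mpr hfix)
  · intro hτ j hj hjn hfix
    rcases le_or_gt j p.val with hjp | hpj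
    · exact hτ j hj (by omega) ((fixesPrefix_insertFixedPoint_iff_of_le hjp τ).mp hfix)
    · obtain ⟨m, rfl⟩ := Nat.exists_eq_add_of_le' hj
      exact hτ m (by omega) (by omega)
        ((fixesPrefix_insertFixedPoint_succ_iff_of_le (by omega) τ).mp hfix)

end InsertFixedPoint

lemma card_isConnectedPerm_fixing {n : ℕ} {p : Fin (n + 1)} (hpos : 0 < p.val) (hlt : p.val < n) :
    Nat.card {σ : Equiv.Perm (Fin (n + 1)) // σ p = p ∧ IsConnectedPerm σ} = c n := by
  let deleteFixedPoint : {σ : Equiv.Perm (Fin (n + 1)) // σ p = p ∧ IsConnectedPerm σ} ≃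
      {τ : Equiv.Perm (Fin n) // IsConnectedPerm τ} :=
    (Equiv.subtypeSubtypeEquivSubtypeInter _ _).symm.trans <|
      ((insertFixedPoint p).subtypeEquiv fun τ =>
        (isConnectedPerm_insertFixedPoint_iff hpos hlt τ).symm).symm
  exact Nat.card_congr deleteFixedPoint

/-- For `1 < i < k`, the number of permutations `σ` of `{1,…,k}` such that `σ(i) = i` and
`σ` fixes no prefix of size `j` for any `1 ≤ j ≤ k−1` equals `c_{k−1}`.
(Labels: the element of `Fin k` with value `v` has label `v + 1`.) -/
theorem count_i_fixed (k i : ℕ) (h1 : 1 < i) (h2 : i < k) :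
    Nat.card {σ : Equiv.Perm (Fin k) //
      σ ⟨i - 1, by omega⟩ = ⟨i - 1, by omega⟩ ∧
      ∀ j, 1 ≤ j → j ≤ k - 1 → ¬ FixesPrefix σ j}
    = c (k - 1) := by
  obtain ⟨n, rfl⟩ : ∃ n, k = n + 1 := Nat.exists_eq_add_of_le' (by omega)
  have not_first : 0 < i - 1 := by omega
  have not_last : i - 1 < n := by omega
  exact card_isConnectedPerm_fixing (p := ⟨i - 1, by omega⟩) not_first not_last
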